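/- Let M : ℝ² → ℝ be smooth with all partial derivatives up to order 9 square-integrable on ℝ², and let Ω := {x=(x₁,x₂,x₃)∈ℝ³ : x₁ > M(x₂,x₃)}. There exists a constant C > 0 (depending only on M) such that for every continuously differentiable f : closure(Ω) → ℝ with ∫_Ω |f|² dx < ∞ and ∫_Ω |∇f|² dx < ∞, one has (∫_Ω |f|⁶ dx)^{1/6} ≤ C (∫_Ω |∇f|² dx)^{1/2}. -/

import Mathlib

/- STATEMENT 4: critical Sobolev inequality ‖f‖_{L⁶(Ω)} ≤ C ‖∇f‖_{L²(Ω)} on the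
perturbed half-space Ω = {x ∈ ℝ³ : x₁ > M(x₂,x₃)}. -/

noncomputable section

open MeasureTheory Real Set Filter
open scoped ENNReal

abbrev E3 : Type := EuclideanSpace ℝ (Fin 3)
abbrev E2 : Type := EuclideanSpace ℝ (Fin 2)

/-- Projection on the tangential variables `x' = (x₂, x₃)`. -/
def proj2 (x : E3) : E2 := (WithLp.equiv 2 (Fin 2 → ℝ)).symm ![x 1, x 2]

/-- The perturbed half-space `Ω = {x : x₁ > M(x₂,x₃)}`. -/
def Omg (M : E2 → ℝ) : Set E3 := {x : E3 | M (proj2 x) < x 0}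

open scoped NNReal

/-!
Averaging `∇M` over unit segments in each coordinate direction bounds its supremum by the `L²` norms
of finitely many derivatives, so `M` is Lipschitz. Hence every direction steep enough with respect
to the Lipschitz constant points into `Ω` from each of its points; these directions form an open
cone, which contains a basis of `ℝ³`. Along rays in the basis directions, `|u(x)|` is at most the
integral of `|∇u|` over the part of the ray in `Ω`, so the Loomis–Whitney type argument of
Gagliardo and Nirenberg gives the `W^{1,1}` inequality directly on `Ω`, with no extension operator.
Applying it to a power of `|u|`, using Hölder's inequality and absorbing gives the `W^{1,p}`
inequality for compactly supported `u`, and cutoff functions with small slope together with Fatou's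
lemma remove the support condition at the price of `u ∈ Lᵖ`.
-/

section Segments

variable {E F : Type*} [NormedAddCommGroup E] [NormedSpace ℝ E]
  [NormedAddCommGroup F] [NormedSpace ℝ F] {u : E → F} {Ω : Set E} {x v : E}

theorem enorm_add_smul_sub_le_lintegral_fderiv (hΩ : IsOpen Ω) (hu : ContDiffOn ℝ 1 u Ω)
    {T : ℝ} (hT : 0 ≤ T) (hseg : ∀ t ∈ Icc 0 T, x + t • v ∈ Ω) :
    ‖u (x + T • v) - u x‖ₑ ≤ ‖v‖ₑ * ∫⁻ t in Icc 0 T, ‖fderiv ℝ u (x + t • v)‖ₑ := by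
  have hline : ContDiff ℝ 1 fun t : ℝ => x + t • v := by fun_prop
  have hderiv : ∀ t ∈ Icc 0 T,
      ‖deriv (fun t : ℝ => u (x + t • v)) t‖ₑ ≤ ‖v‖ₑ * ‖fderiv ℝ u (x + t • v)‖ₑ := by
    intro t ht
    have hu_at : HasFDerivAt u (fderiv ℝ u (x + t • v)) (x + t • v) :=
      ((hu.contDiffAt (hΩ.mem_nhds (hseg t ht))).differentiableAt one_ne_zero).hasFDerivAt
    have hline_at : HasDerivAt (fun t : ℝ => x + t • v) v t := by
      simpa using ((hasDerivAt_id t).smul_const v).const_add x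
    have hcomp := hu_at.comp_hasDerivAt t hline_at
    rw [show deriv (fun t : ℝ => u (x + t • v)) t = _ from hcomp.deriv, mul_comm]
    exact (fderiv ℝ u (x + t • v)).le_opENorm v
  calc ‖u (x + T • v) - u x‖ₑ
      = ‖u (x + T • v) - u (x + (0 : ℝ) • v)‖ₑ := by rw [zero_smul, add_zero]
    _ ≤ ∫⁻ t in Icc 0 T, ‖deriv (fun t : ℝ => u (x + t • v)) t‖ₑ :=
        enorm_sub_le_lintegral_deriv_of_contDiffOn_Icc
          (hu.comp hline.contDiffOn fun t ht => hseg t ht) hT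
    _ ≤ ∫⁻ t in Icc 0 T, ‖v‖ₑ * ‖fderiv ℝ u (x + t • v)‖ₑ :=
        setLIntegral_mono' measurableSet_Icc hderiv
    _ = ‖v‖ₑ * ∫⁻ t in Icc 0 T, ‖fderiv ℝ u (x + t • v)‖ₑ :=
        lintegral_const_mul' _ _ enorm_ne_top

theorem enorm_le_lintegral_enorm_add_enorm_fderiv (hu : ContDiff ℝ 1 u) (hv : ‖v‖ ≤ 1) :
    ‖u x‖ₑ ≤ ∫⁻ t in Icc (0 : ℝ) 1, (‖u (x + t • v)‖ₑ + ‖fderiv ℝ u (x + t • v)‖ₑ) := by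
  set D : ℝ≥0∞ := ∫⁻ t in Icc (0 : ℝ) 1, ‖fderiv ℝ u (x + t • v)‖ₑ
  have hv' : ‖v‖ₑ ≤ 1 := (ofReal_norm v).symm.trans_le (ENNReal.ofReal_le_one.2 hv)
  have hpoint : ∀ t ∈ Icc (0 : ℝ) 1, ‖u x‖ₑ ≤ ‖u (x + t • v)‖ₑ + D := by
    intro t ht
    have hdiff : ‖u (x + t • v) - u x‖ₑ ≤ D :=
      calc ‖u (x + t • v) - u x‖ₑ
          ≤ ‖v‖ₑ * ∫⁻ s in Icc 0 t, ‖fderiv ℝ u (x + s • v)‖ₑ :=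
            enorm_add_smul_sub_le_lintegral_fderiv isOpen_univ hu.contDiffOn ht.1
              fun _ _ => mem_univ _
        _ ≤ 1 * D := by
            gcongr
            exact lintegral_mono_set (Icc_subset_Icc_right ht.2)
        _ = D := one_mul D
    calc ‖u x‖ₑ = ‖u (x + t • v) - (u (x + t • v) - u x)‖ₑ := by rw [sub_sub_cancel]
      _ ≤ ‖u (x + t • v)‖ₑ + ‖u (x + t • v) - u x‖ₑ := enorm_sub_le
      _ ≤ ‖u (x + t • v)‖ₑ + D := by gcongr
  have hmeas : Measurable fun t : ℝ => ‖u (x + t • v)‖ₑ :=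
    (hu.continuous.comp (by fun_prop)).enorm.measurable
  calc ‖u x‖ₑ = ∫⁻ _ in Icc (0 : ℝ) 1, ‖u x‖ₑ := by simp
    _ ≤ ∫⁻ t in Icc (0 : ℝ) 1, (‖u (x + t • v)‖ₑ + D) :=
        setLIntegral_mono' measurableSet_Icc hpoint
    _ = (∫⁻ t in Icc (0 : ℝ) 1, ‖u (x + t • v)‖ₑ) + D := by
        rw [lintegral_add_left hmeas]; simp
    _ = _ := (lintegral_add_left hmeas _).symm

end Segments

section SupBound

variable {ι : Type*} {E F : Type*} [NormedAddCommGroup E] [NormedSpace ℝ E]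
  [NormedAddCommGroup F] [NormedSpace ℝ F]

theorem le_lmarginal_of_le_lintegral_update [DecidableEq ι] {X : ι → Type*}
    [∀ i, MeasurableSpace (X i)] {μ : ∀ i, Measure (X i)} [∀ i, SigmaFinite (μ i)]
    {g : ℕ → (∀ i, X i) → ℝ≥0∞} {n : ℕ} (hg : ∀ k ≤ n, Measurable (g k)) {x : ∀ i, X i}
    (hstep : ∀ k < n, ∀ i y, y i = x i → g k y ≤ ∫⁻ t, g (k + 1) (Function.update y i t) ∂μ i)
    (s : Finset ι) (k : ℕ) (hk : k + s.card ≤ n) (y : ∀ i, X i) (hy : ∀ i ∈ s, y i = x i) :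
    g k y ≤ (∫⋯∫⁻_s, g (k + s.card) ∂μ) y := by
  induction s using Finset.induction_on generalizing k y with
  | empty => simp
  | insert i s hi ih =>
    have hcard : k + (insert i s).card = k + 1 + s.card := by
      rw [Finset.card_insert_of_notMem hi]; ring
    rw [lmarginal_insert _ (hg _ hk) hi, hcard]
    refine (hstep k (by omega) i y (hy i (Finset.mem_insert_self i s))).trans
      (lintegral_mono fun t => ih (k + 1) (hcard ▸ hk) _ fun j hj => ?_)
    rw [Function.update_of_ne (ne_of_mem_of_not_mem hj hi)]
    exact hy j (Finset.mem_insert_of_mem hj)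

theorem enorm_iteratedFDeriv_le_lintegral {u : E → F} {j : ℕ} (hu : ContDiff ℝ (j + 1) u)
    (x : E) {v : E} (hv : ‖v‖ ≤ 1) :
    ‖iteratedFDeriv ℝ j u x‖ₑ ≤ ∫⁻ t in Icc (0 : ℝ) 1,
      (‖iteratedFDeriv ℝ j u (x + t • v)‖ₑ + ‖iteratedFDeriv ℝ (j + 1) u (x + t • v)‖ₑ) := by
  have hu' : ContDiff ℝ 1 (iteratedFDeriv ℝ j u) :=
    hu.iteratedFDeriv_right (add_comm (1 : WithTop ℕ∞) j).le
  refine (enorm_le_lintegral_enorm_add_enorm_fderiv hu' hv).trans_eq ?_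
  congr! 3 with t
  rw [← ofReal_norm, norm_fderiv_iteratedFDeriv, ofReal_norm]

/-- The pointwise density `2ᵏ ∑_{j ≤ k} ‖Dʲu‖` of the `W^{k,1}` norm; with the factor `2ᵏ` the
density of order `k` at a point is at most the average of that of order `k + 1` over any unit
segment starting there. -/
def sobolevDensity (u : E → F) (k : ℕ) (x : E) : ℝ≥0∞ :=
  2 ^ k * ∑ j ∈ Finset.range (k + 1), ‖iteratedFDeriv ℝ j u x‖ₑ

theorem sobolevDensity_zero (u : E → F) (x : E) : sobolevDensity u 0 x = ‖u x‖ₑ := by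
  simp [sobolevDensity, ← ofReal_norm]

theorem sobolevDensity_le_lintegral {u : E → F} {k : ℕ} (hu : ContDiff ℝ (k + 1) u) (x : E)
    {v : E} (hv : ‖v‖ ≤ 1) :
    sobolevDensity u k x ≤ ∫⁻ t in Icc (0 : ℝ) 1, sobolevDensity u (k + 1) (x + t • v) := by
  have hsum : ∀ y, ∑ j ∈ Finset.range (k + 1), (‖iteratedFDeriv ℝ j u y‖ₑ +
      ‖iteratedFDeriv ℝ (j + 1) u y‖ₑ) ≤
        2 * ∑ j ∈ Finset.range (k + 2), ‖iteratedFDeriv ℝ j u y‖ₑ := by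
    intro y
    rw [Finset.sum_add_distrib, two_mul]
    gcongr
    · omega
    · rw [Finset.sum_range_succ' _ (k + 1)]
      exact le_self_add
  calc sobolevDensity u k x
      ≤ 2 ^ k * ∑ j ∈ Finset.range (k + 1), ∫⁻ t in Icc (0 : ℝ) 1,
          (‖iteratedFDeriv ℝ j u (x + t • v)‖ₑ + ‖iteratedFDeriv ℝ (j + 1) u (x + t • v)‖ₑ) := by
        rw [sobolevDensity]
        gcongr with j hj
        exact enorm_iteratedFDeriv_le_lintegral
          (hu.of_le (mod_cast Nat.succ_le_of_lt (Finset.mem_range.1 hj))) x hv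
    _ = 2 ^ k * ∫⁻ t in Icc (0 : ℝ) 1, ∑ j ∈ Finset.range (k + 1),
          (‖iteratedFDeriv ℝ j u (x + t • v)‖ₑ + ‖iteratedFDeriv ℝ (j + 1) u (x + t • v)‖ₑ) := by
        rw [lintegral_finsetSum' _ fun j hj => ?_]
        have hj' : j + 1 ≤ k + 1 := Finset.mem_range.1 hj
        have hline : Continuous fun t : ℝ => x + t • v := by fun_prop
        have hj₀ := hu.continuous_iteratedFDeriv (m := j) (by norm_cast; omega)
        have hj₁ := hu.continuous_iteratedFDeriv (m := j + 1) (by norm_cast)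
        exact ((hj₀.comp hline).enorm.add (hj₁.comp hline).enorm).measurable.aemeasurable
    _ ≤ 2 ^ k * ∫⁻ t in Icc (0 : ℝ) 1, 2 * ∑ j ∈ Finset.range (k + 2),
          ‖iteratedFDeriv ℝ j u (x + t • v)‖ₑ := by
        gcongr
        exact hsum _
    _ = ∫⁻ t in Icc (0 : ℝ) 1, sobolevDensity u (k + 1) (x + t • v) := by
        rw [← lintegral_const_mul' _ _ (by simp)]
        simp only [sobolevDensity, pow_succ, mul_assoc]

theorem measurable_sobolevDensity [MeasurableSpace E] [OpensMeasurableSpace E] {u : E → F}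
    {k : ℕ} (hu : ContDiff ℝ k u) : Measurable (sobolevDensity u k) := by
  refine (Finset.measurable_fun_sum _ fun j hj => ?_).const_mul _
  have hj' : j ≤ k := Finset.mem_range_succ_iff.1 hj
  exact (hu.continuous_iteratedFDeriv (mod_cast hj')).enorm.measurable

variable [Fintype ι]

theorem sobolevDensity_le_lintegral_update [DecidableEq ι] {u : EuclideanSpace ℝ ι → F} {k : ℕ}
    (hu : ContDiff ℝ (k + 1) u) (y : ι → ℝ) (i : ι) :
    sobolevDensity u k (WithLp.toLp 2 y) ≤ ∫⁻ t in Icc (y i) (y i + 1),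
      sobolevDensity u (k + 1) (WithLp.toLp 2 (Function.update y i t)) := by
  have hline : ∀ t : ℝ, WithLp.toLp 2 (Function.update y i (y i + t)) =
      WithLp.toLp 2 y + t • EuclideanSpace.single i (1 : ℝ) := by
    intro t
    ext j
    rcases eq_or_ne j i with rfl | hj <;> simp [*]
  refine (sobolevDensity_le_lintegral hu _
    (v := EuclideanSpace.single i 1) (by simp)).trans_eq ?_
  simp only [← hline]
  have hshift := (measurePreserving_add_left volume (y i)).setLIntegral_comp_emb
    (measurableEmbedding_addLeft (y i))
    (fun t => sobolevDensity u (k + 1) (WithLp.toLp 2 (Function.update y i t))) (Icc 0 1)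
  rw [image_const_add_Icc, add_zero] at hshift
  exact hshift

theorem lintegral_unitCube_le_eLpNorm {G : Type*} [NormedAddCommGroup G]
    {f : EuclideanSpace ℝ ι → G} (hf : Continuous f) (x : ι → ℝ) {p : ℝ≥0∞} (hp : 1 ≤ p) :
    ∫⁻ z, ‖f (WithLp.toLp 2 z)‖ₑ ∂Measure.pi (fun i => volume.restrict (Icc (x i) (x i + 1))) ≤
      eLpNorm f p volume := by
  set ν := Measure.pi fun i => (volume : Measure ℝ).restrict (Icc (x i) (x i + 1)) with hν
  have hν_le : ν ≤ volume := by
    rw [hν, ← Measure.restrict_pi_pi, ← volume_pi]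
    exact Measure.restrict_le_self
  have : ∀ i, IsProbabilityMeasure ((volume : Measure ℝ).restrict (Icc (x i) (x i + 1))) :=
    fun i => ⟨by simp⟩
  have hf' : Continuous fun z : ι → ℝ => f (WithLp.toLp 2 z) := by fun_prop
  calc ∫⁻ z, ‖f (WithLp.toLp 2 z)‖ₑ ∂ν
      = eLpNorm (fun z => f (WithLp.toLp 2 z)) 1 ν := eLpNorm_one_eq_lintegral_enorm.symm
    _ ≤ eLpNorm (fun z => f (WithLp.toLp 2 z)) p ν :=
        eLpNorm_le_eLpNorm_of_exponent_le hp hf'.aestronglyMeasurable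
    _ ≤ eLpNorm (fun z => f (WithLp.toLp 2 z)) p volume := eLpNorm_mono_measure _ hν_le
    _ = eLpNorm f p volume := eLpNorm_comp_measurePreserving hf.aestronglyMeasurable
        (PiLp.volume_preserving_toLp ι)

theorem enorm_le_sum_eLpNorm_iteratedFDeriv {u : EuclideanSpace ℝ ι → F}
    (hu : ContDiff ℝ (Fintype.card ι) u) {p : ℝ≥0∞} (hp : 1 ≤ p) (x : EuclideanSpace ℝ ι) :
    ‖u x‖ₑ ≤ 2 ^ Fintype.card ι * ∑ j ∈ Finset.range (Fintype.card ι + 1),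
      eLpNorm (iteratedFDeriv ℝ j u) p volume := by
  classical
  set n := Fintype.card ι
  set ν : ι → Measure ℝ := fun i => volume.restrict (Icc (x i) (x i + 1))
  have hmeas : ∀ k ≤ n, Measurable fun y : ι → ℝ => sobolevDensity u k (WithLp.toLp 2 y) :=
    fun k hk => (measurable_sobolevDensity (hu.of_le (mod_cast hk))).comp (by fun_prop)
  have hstep : ∀ k < n, ∀ i y, y i = x i → sobolevDensity u k (WithLp.toLp 2 y) ≤
      ∫⁻ t, sobolevDensity u (k + 1) (WithLp.toLp 2 (Function.update y i t)) ∂ν i := by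
    intro k hk i y hy
    simpa only [ν, hy] using
      sobolevDensity_le_lintegral_update (hu.of_le (mod_cast hk)) y i
  have hcont : ∀ j ∈ Finset.range (n + 1), Continuous (iteratedFDeriv ℝ j u) := fun j hj =>
    hu.continuous_iteratedFDeriv (mod_cast Finset.mem_range_succ_iff.1 hj)
  have hcube := le_lmarginal_of_le_lintegral_update hmeas hstep Finset.univ 0
    (by rw [zero_add, Finset.card_univ]) x fun _ _ => rfl
  rw [lmarginal_univ, zero_add, Finset.card_univ] at hcube
  calc ‖u x‖ₑ = sobolevDensity u 0 x := (sobolevDensity_zero u x).symm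
    _ ≤ ∫⁻ z, sobolevDensity u n (WithLp.toLp 2 z) ∂Measure.pi ν := hcube
    _ = 2 ^ n * ∑ j ∈ Finset.range (n + 1),
          ∫⁻ z, ‖iteratedFDeriv ℝ j u (WithLp.toLp 2 z)‖ₑ ∂Measure.pi ν := by
        simp only [sobolevDensity]
        rw [lintegral_const_mul' _ _ (by simp), lintegral_finsetSum' _ fun j hj => ?_]
        exact ((hcont j hj).comp (by fun_prop)).enorm.measurable.aemeasurable
    _ ≤ _ := by
        gcongr with j hj
        exact lintegral_unitCube_le_eLpNorm (hcont j hj) x hp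

theorem exists_lipschitzWith_of_memLp_iteratedFDeriv {u : EuclideanSpace ℝ ι → F}
    (hu : ContDiff ℝ (Fintype.card ι + 1) u) {p : ℝ≥0∞} (hp : 1 ≤ p)
    (hLp : ∀ j ∈ Icc 1 (Fintype.card ι + 1), MemLp (iteratedFDeriv ℝ j u) p volume) :
    ∃ L, LipschitzWith L u := by
  set n := Fintype.card ι
  set L : ℝ≥0∞ := 2 ^ n * ∑ j ∈ Finset.range (n + 1),
    eLpNorm (iteratedFDeriv ℝ j (fderiv ℝ u)) p volume
  have hL : L ≠ ∞ := by
    refine ENNReal.mul_ne_top (by simp) (ENNReal.sum_ne_top.2 fun j hj => ?_)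
    have hj' : j + 1 ∈ Icc 1 (n + 1) := ⟨by omega, Finset.mem_range.1 hj⟩
    rw [eLpNorm_congr_norm_ae (.of_forall fun x => norm_iteratedFDeriv_fderiv)]
    exact (hLp _ hj').eLpNorm_ne_top
  have hbound : ∀ x, ‖fderiv ℝ u x‖ₑ ≤ L := fun x =>
    enorm_le_sum_eLpNorm_iteratedFDeriv (hu.fderiv_right le_rfl) hp x
  refine ⟨L.toNNReal, lipschitzWith_of_nnnorm_fderiv_le (𝕜 := ℝ)
    (hu.differentiable (by simp)) fun x => ?_⟩
  rw [← ENNReal.coe_le_coe, ENNReal.coe_toNNReal hL]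
  exact hbound x

theorem exists_lipschitzWith_of_integrable_norm_iteratedFDeriv_sq {u : EuclideanSpace ℝ ι → F}
    (hu : ContDiff ℝ (Fintype.card ι + 1) u) (hint : ∀ j ∈ Icc 1 (Fintype.card ι + 1),
      Integrable fun x => ‖iteratedFDeriv ℝ j u x‖ ^ 2) :
    ∃ L, LipschitzWith L u := by
  refine exists_lipschitzWith_of_memLp_iteratedFDeriv hu one_le_two fun j hj => ?_
  have hcont : Continuous (iteratedFDeriv ℝ j u) :=
    hu.continuous_iteratedFDeriv (mod_cast hj.2)
  exact (memLp_two_iff_integrable_sq_norm hcont.aestronglyMeasurable).2 (hint j hj)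

end SupBound

section RecessionCone

variable {E F : Type*} [NormedAddCommGroup E] [NormedSpace ℝ E]
  [NormedAddCommGroup F] [NormedSpace ℝ F] {u : E → F} {Ω : Set E} {x v : E}

/-- The recession cone of `Ω`: the directions `v` such that the whole ray `x + t v`, `t ≥ 0`,
stays in `Ω` as soon as `x` does. It always contains `0`. -/
def recessionCone (Ω : Set E) : Set E := {v | ∀ x ∈ Ω, ∀ t : ℝ, 0 ≤ t → x + t • v ∈ Ω}

theorem exists_nonneg_apply_add_smul_eq_zero {G : Type*} [Zero G] {u : E → G}
    (hu : HasCompactSupport u) (x : E) (hv : v ≠ 0) :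
    ∃ T : ℝ, 0 ≤ T ∧ u (x + T • v) = 0 := by
  obtain ⟨R, hR⟩ := hu.isCompact.isBounded.subset_closedBall 0
  have hv' : 0 < ‖v‖ := norm_pos_iff.2 hv
  obtain ⟨T, hT0, hT⟩ : ∃ T : ℝ, 0 ≤ T ∧ R + ‖x‖ < T * ‖v‖ := by
    refine ⟨(|R| + ‖x‖ + 1) / ‖v‖, by positivity, ?_⟩
    rw [div_mul_cancel₀ _ hv'.ne']
    linarith [le_abs_self R]
  refine ⟨T, hT0, image_eq_zero_of_notMem_tsupport fun hmem => ?_⟩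
  have hle : ‖x + T • v‖ ≤ R := mem_closedBall_zero_iff.1 (hR hmem)
  have hsmul : ‖T • v‖ ≤ ‖x + T • v‖ + ‖x‖ := by
    simpa using norm_sub_le (x + T • v) x
  rw [norm_smul, Real.norm_of_nonneg hT0] at hsmul
  linarith

theorem enorm_le_lintegral_fderiv_of_mem_recessionCone (hΩ : IsOpen Ω)
    (hu : ContDiffOn ℝ 1 u Ω) (hsupp : HasCompactSupport u) (hv : v ∈ recessionCone Ω)
    (hv0 : v ≠ 0) (hx : x ∈ Ω) :
    ‖u x‖ₑ ≤ ‖v‖ₑ * ∫⁻ t in Ici (0 : ℝ), ‖fderiv ℝ u (x + t • v)‖ₑ := by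
  obtain ⟨T, hT, hT_zero⟩ := exists_nonneg_apply_add_smul_eq_zero hsupp x hv0
  calc ‖u x‖ₑ = ‖u (x + T • v) - u x‖ₑ := by rw [hT_zero, zero_sub, enorm_neg]
    _ ≤ ‖v‖ₑ * ∫⁻ t in Icc 0 T, ‖fderiv ℝ u (x + t • v)‖ₑ :=
        enorm_add_smul_sub_le_lintegral_fderiv hΩ hu hT fun t ht => hv x hx t ht.1
    _ ≤ _ := by
        gcongr
        exact Icc_subset_Ici_self

end RecessionCone

section GagliardoNirenberg

variable {ι E F : Type*} [NormedAddCommGroup E] [NormedSpace ℝ E]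
  [NormedAddCommGroup F] [NormedSpace ℝ F] {u : E → F} {Ω : Set E} {b : Module.Basis ι ℝ E}

theorem equivFun_symm_update [Finite ι] [DecidableEq ι] (b : Module.Basis ι ℝ E) (y : ι → ℝ)
    (i : ι) (s : ℝ) :
    b.equivFun.symm (Function.update y i s) = b.equivFun.symm y + (s - y i) • b i := by
  rw [← sub_eq_iff_eq_add', ← map_sub]
  have hsub : Function.update y i s - y = Pi.single i (s - y i) := by
    ext j
    rcases eq_or_ne j i with rfl | hj <;> simp [*]
  rw [hsub, ← mul_one (s - y i), ← smul_eq_mul, Pi.single_smul, map_smul]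
  simp

theorem enorm_equivFun_symm_le_lintegral_update [Finite ι] [DecidableEq ι] (hΩ : IsOpen Ω)
    (hb : ∀ i, b i ∈ recessionCone Ω) (hu : ContDiffOn ℝ 1 u Ω) (hsupp : HasCompactSupport u)
    (y : ι → ℝ) (i : ι) :
    Ω.indicator (fun x => ‖u x‖ₑ) (b.equivFun.symm y) ≤ ‖b i‖ₑ * ∫⁻ s,
      Ω.indicator (fun x => ‖fderiv ℝ u x‖ₑ) (b.equivFun.symm (Function.update y i s)) := by
  set x := b.equivFun.symm y with hx
  refine indicator_apply_le' (fun hxΩ => ?_) fun _ => zero_le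
  have hray : ∀ t ∈ Ici (0 : ℝ), ‖fderiv ℝ u (x + t • b i)‖ₑ =
      Ω.indicator (fun x => ‖fderiv ℝ u x‖ₑ) (x + t • b i) := fun t ht =>
    (indicator_of_mem (hb i x hxΩ t ht) fun x => ‖fderiv ℝ u x‖ₑ).symm
  calc ‖u x‖ₑ ≤ ‖b i‖ₑ * ∫⁻ t in Ici (0 : ℝ), ‖fderiv ℝ u (x + t • b i)‖ₑ :=
        enorm_le_lintegral_fderiv_of_mem_recessionCone hΩ hu hsupp (hb i) (b.ne_zero i) hxΩ
    _ ≤ ‖b i‖ₑ * ∫⁻ t, Ω.indicator (fun x => ‖fderiv ℝ u x‖ₑ) (x + t • b i) := by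
        rw [setLIntegral_congr_fun measurableSet_Ici hray]
        gcongr
        exact Measure.restrict_le_self
    _ = _ := by
        simp only [equivFun_symm_update, ← hx]
        rw [lintegral_sub_right_eq_self
          (fun t => Ω.indicator (fun x => ‖fderiv ℝ u x‖ₑ) (x + t • b i))]

theorem measurable_indicator_enorm_fderiv [MeasurableSpace E] [BorelSpace E] (hΩ : IsOpen Ω)
    (hu : ContDiffOn ℝ 1 u Ω) : Measurable (Ω.indicator fun x => ‖fderiv ℝ u x‖ₑ) := by
  classical
  rw [← piecewise_eq_indicator]
  exact (hu.continuousOn_fderiv_of_isOpen hΩ le_rfl).enorm.measurable_piecewise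
    continuousOn_const hΩ.measurableSet

variable [Fintype ι]

theorem lintegral_rpow_le_of_le_lintegral_update [DecidableEq ι] {q : ℝ}
    (hq : Real.HolderConjugate (Fintype.card ι) q) {g h : (ι → ℝ) → ℝ≥0∞} (hh : Measurable h)
    (hgh : ∀ y i, g y ≤ ∫⁻ s, h (Function.update y i s)) :
    ∫⁻ y, g y ^ q ≤ (∫⁻ y, h y) ^ q := by
  have hexp : 0 ≤ 1 / (Fintype.card ι - 1 : ℝ) := one_div_nonneg.2 (sub_nonneg.2 hq.lt.le)
  have hq_eq : q = (1 / (Fintype.card ι - 1 : ℝ)) * Fintype.card ι := by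
    rw [hq.conjugate_eq]; ring
  calc ∫⁻ y, g y ^ q
      = ∫⁻ y, ∏ _i : ι, g y ^ (1 / (Fintype.card ι - 1 : ℝ)) := by
        congr! 2 with y
        rw [Finset.prod_const, Finset.card_univ, ← ENNReal.rpow_mul_natCast, ← hq_eq]
    _ ≤ ∫⁻ y, ∏ i, (∫⁻ s, h (Function.update y i s)) ^ (1 / (Fintype.card ι - 1 : ℝ)) := by
        gcongr with y i
        exact hgh y i
    _ ≤ (∫⁻ y, h y) ^ q := lintegral_prod_lintegral_pow_le (fun _ => volume) hq hh

theorem exists_lintegral_eq_mul_lintegral_equivFun_symm [MeasurableSpace E] [BorelSpace E]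
    (b : Module.Basis ι ℝ E) (μ : Measure E) [μ.IsAddHaarMeasure] :
    ∃ c : ℝ≥0, c ≠ 0 ∧
      ∀ h : E → ℝ≥0∞, ∫⁻ x, h x ∂μ = c * ∫⁻ y, h (b.equivFun.symm y) := by
  have : FiniteDimensional ℝ E := b.finiteDimensional_of_finite
  set A : (ι → ℝ) ≃L[ℝ] E := b.equivFunL.symm
  have : (Measure.map A volume).IsAddHaarMeasure := A.isAddHaarMeasure_map volume
  have hμ := Measure.isAddLeftInvariant_eq_smul μ (Measure.map A volume)
  refine ⟨μ.addHaarScalarFactor (Measure.map A volume),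
    (Measure.addHaarScalarFactor_pos_of_isAddHaarMeasure _ _).ne', fun h => ?_⟩
  conv_lhs => rw [hμ]
  rw [lintegral_smul_measure, ENNReal.smul_def, smul_eq_mul]
  congr 1
  exact lintegral_map_equiv h A.toHomeomorph.toMeasurableEquiv

theorem lintegral_rpow_le_lintegral_fderiv_of_basis (hΩ : IsOpen Ω)
    (hb : ∀ i, b i ∈ recessionCone Ω) {q : ℝ} (hq : Real.HolderConjugate (Fintype.card ι) q)
    (hu : ContDiffOn ℝ 1 u Ω) (hsupp : HasCompactSupport u) :
    ∫⁻ y, Ω.indicator (fun x => ‖u x‖ₑ) (b.equivFun.symm y) ^ q ≤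
      ((∑ i, ‖b i‖ₑ) *
        ∫⁻ y, Ω.indicator (fun x => ‖fderiv ℝ u x‖ₑ) (b.equivFun.symm y)) ^ q := by
  classical
  have : FiniteDimensional ℝ E := b.finiteDimensional_of_finite
  borelize E
  set D : (ι → ℝ) → ℝ≥0∞ := fun y => Ω.indicator (fun x => ‖fderiv ℝ u x‖ₑ) (b.equivFun.symm y)
  have hD : Measurable D := (measurable_indicator_enorm_fderiv hΩ hu).comp
    (b.equivFunL.symm.continuous.measurable)
  rw [← lintegral_const_mul _ hD]
  refine lintegral_rpow_le_of_le_lintegral_update hq (hD.const_mul _) fun y i => ?_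
  calc Ω.indicator (fun x => ‖u x‖ₑ) (b.equivFun.symm y)
      ≤ ‖b i‖ₑ * ∫⁻ s, D (Function.update y i s) :=
        enorm_equivFun_symm_le_lintegral_update hΩ hb hu hsupp y i
    _ ≤ (∑ i, ‖b i‖ₑ) * ∫⁻ s, D (Function.update y i s) := by
        gcongr
        exact Finset.single_le_sum (f := fun i => ‖b i‖ₑ) (fun _ _ => zero_le) (Finset.mem_univ i)
    _ = ∫⁻ s, (∑ i, ‖b i‖ₑ) * D (Function.update y i s) :=
        (lintegral_const_mul _ (hD.comp (measurable_update y))).symm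

theorem exists_eLpNorm_le_eLpNorm_one_fderiv_of_basis [MeasurableSpace E] [BorelSpace E]
    (μ : Measure E) [μ.IsAddHaarMeasure] (hΩ : IsOpen Ω) (hb : ∀ i, b i ∈ recessionCone Ω)
    {q : ℝ≥0} (hq : NNReal.HolderConjugate (Fintype.card ι) q) :
    ∃ C : ℝ≥0, ∀ u : E → F, ContDiffOn ℝ 1 u Ω → HasCompactSupport u →
      eLpNorm u q (μ.restrict Ω) ≤ C * eLpNorm (fderiv ℝ u) 1 (μ.restrict Ω) := by
  obtain ⟨c, hc, hμ⟩ := exists_lintegral_eq_mul_lintegral_equivFun_symm b μ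
  have hq0 : q ≠ 0 := hq.symm.pos.ne'
  have hq0' : (0 : ℝ) < q := NNReal.coe_pos.2 hq.symm.pos
  refine ⟨c ^ (1 / q : ℝ) * (∑ i, ‖b i‖₊) * c⁻¹, fun u hu hsupp => ?_⟩
  set U : (ι → ℝ) → ℝ≥0∞ := fun y => Ω.indicator (fun x => ‖u x‖ₑ) (b.equivFun.symm y)
  set D : (ι → ℝ) → ℝ≥0∞ := fun y => Ω.indicator (fun x => ‖fderiv ℝ u x‖ₑ) (b.equivFun.symm y)
  have hD : ∫⁻ y, D y = (c : ℝ≥0∞)⁻¹ * eLpNorm (fderiv ℝ u) 1 (μ.restrict Ω) := by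
    rw [eLpNorm_one_eq_lintegral_enorm, ← lintegral_indicator hΩ.measurableSet, hμ, ← mul_assoc,
      ENNReal.inv_mul_cancel (by simpa) ENNReal.coe_ne_top, one_mul]
  have hU : ∫⁻ x in Ω, ‖u x‖ₑ ^ (q : ℝ) ∂μ = c * ∫⁻ y, U y ^ (q : ℝ) := by
    rw [← lintegral_indicator hΩ.measurableSet, hμ]
    congr! 3 with y
    exact congr_fun (indicator_comp_of_zero (f := fun x => ‖u x‖ₑ)
      (g := fun a : ℝ≥0∞ => a ^ (q : ℝ)) (ENNReal.zero_rpow_of_pos hq0')) _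
  calc eLpNorm u q (μ.restrict Ω)
      = (c * ∫⁻ y, U y ^ (q : ℝ)) ^ (1 / q : ℝ) := by
        rw [eLpNorm_nnreal_eq_lintegral hq0, hU]
    _ ≤ (c * ((∑ i, ‖b i‖ₑ) * ∫⁻ y, D y) ^ (q : ℝ)) ^ (1 / q : ℝ) := by
        gcongr
        exact lintegral_rpow_le_lintegral_fderiv_of_basis hΩ hb (NNReal.HolderConjugate.coe hq)
          hu hsupp
    _ = c ^ (1 / q : ℝ) * ((∑ i, ‖b i‖ₑ) * ∫⁻ y, D y) := by
        rw [ENNReal.mul_rpow_of_nonneg _ _ (by positivity), ← ENNReal.rpow_mul,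
          mul_one_div_cancel hq0'.ne', ENNReal.rpow_one]
    _ = _ := by
        rw [hD]
        push_cast [← ENNReal.coe_rpow_of_nonneg _ (one_div_pos.2 hq0').le, ENNReal.coe_inv hc]
        simp only [mul_assoc, enorm_eq_nnnorm]

end GagliardoNirenberg

section CompactSupport

variable {E F : Type*} [NormedAddCommGroup E] [NormedSpace ℝ E]
  [NormedAddCommGroup F] [InnerProductSpace ℝ F] {u : E → F} {Ω : Set E}

theorem norm_fderiv_norm_rpow_le_of_differentiableAt {x : E} (hu : DifferentiableAt ℝ u x) {γ : ℝ}
    (hγ : 1 < γ) :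
    ‖fderiv ℝ (fun x => ‖u x‖ ^ γ) x‖ ≤ γ * ‖u x‖ ^ (γ - 1) * ‖fderiv ℝ u x‖ := by
  have hcomp : fderiv ℝ (fun x => ‖u x‖ ^ γ) x = _ :=
    ((hasFDerivAt_norm_rpow (u x) hγ).comp x hu.hasFDerivAt).fderiv
  have houter : ‖(γ * ‖u x‖ ^ (γ - 2)) • innerSL ℝ (u x)‖ = γ * ‖u x‖ ^ (γ - 1) := by
    rw [norm_smul, innerSL_apply_norm, Real.norm_of_nonneg (by positivity), mul_assoc]
    rcases eq_or_ne (u x) 0 with h0 | h0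
    · rw [h0, norm_zero, mul_zero, Real.zero_rpow (by linarith)]
    · rw [← Real.rpow_add_one (norm_ne_zero_iff.2 h0)]
      ring_nf
  rw [hcomp, ← houter]
  exact ContinuousLinearMap.opNorm_comp_le _ _

theorem eLpNorm_fderiv_norm_rpow_le [FiniteDimensional ℝ E] [MeasurableSpace E] [BorelSpace E]
    {μ : Measure E} (hΩ : IsOpen Ω) (hu : ContDiffOn ℝ 1 u Ω) {γ : ℝ} (hγ : 1 < γ)
    {p q r : ℝ≥0∞} [ENNReal.HolderTriple q p r] :
    eLpNorm (fderiv ℝ fun x => ‖u x‖ ^ γ) r (μ.restrict Ω) ≤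
      ENNReal.ofReal γ * (eLpNorm u (q * ENNReal.ofReal (γ - 1)) (μ.restrict Ω) ^ (γ - 1) *
        eLpNorm (fderiv ℝ u) p (μ.restrict Ω)) := by
  have hu_meas : AEStronglyMeasurable u (μ.restrict Ω) :=
    hu.continuousOn.aestronglyMeasurable hΩ.measurableSet
  have hfderiv_meas : AEStronglyMeasurable (fderiv ℝ u) (μ.restrict Ω) :=
    (hu.continuousOn_fderiv_of_isOpen hΩ le_rfl).aestronglyMeasurable hΩ.measurableSet
  have hpoint : ∀ᵐ x ∂μ.restrict Ω, ‖fderiv ℝ (fun x => ‖u x‖ ^ γ) x‖ ≤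
      γ * ‖((fun x => ‖u x‖ ^ (γ - 1)) • fderiv ℝ u) x‖ := by
    filter_upwards [ae_restrict_mem hΩ.measurableSet] with x hx
    have hux : DifferentiableAt ℝ u x :=
      (hu.differentiableOn one_ne_zero).differentiableAt (hΩ.mem_nhds hx)
    refine (norm_fderiv_norm_rpow_le_of_differentiableAt hux hγ).trans_eq ?_
    rw [Pi.smul_apply', norm_smul, Real.norm_of_nonneg (by positivity), mul_assoc]
  calc eLpNorm (fderiv ℝ fun x => ‖u x‖ ^ γ) r (μ.restrict Ω)
      ≤ ENNReal.ofReal γ * eLpNorm ((fun x => ‖u x‖ ^ (γ - 1)) • fderiv ℝ u) r (μ.restrict Ω) :=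
        eLpNorm_le_mul_eLpNorm_of_ae_le_mul hpoint r
    _ ≤ ENNReal.ofReal γ * (eLpNorm (fun x => ‖u x‖ ^ (γ - 1)) q (μ.restrict Ω) *
          eLpNorm (fderiv ℝ u) p (μ.restrict Ω)) := by
        gcongr
        exact eLpNorm_smul_le_mul_eLpNorm hfderiv_meas
          (hu_meas.norm.aemeasurable.pow_const _).aestronglyMeasurable
    _ = _ := by rw [eLpNorm_norm_rpow u (sub_pos.2 hγ)]

theorem le_of_rpow_add_one_le_rpow_mul {a b : ℝ≥0∞} {δ : ℝ} (hδ : 0 ≤ δ) (ha : a ≠ ∞)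
    (h : a ^ (δ + 1) ≤ a ^ δ * b) : a ≤ b := by
  rcases eq_or_ne a 0 with rfl | ha0
  · exact zero_le
  rw [ENNReal.rpow_add _ _ ha0 ha, ENNReal.rpow_one] at h
  exact (ENNReal.mul_le_mul_iff_right (ENNReal.rpow_pos ha0.bot_lt ha).ne'
    (ENNReal.rpow_ne_top_of_nonneg hδ ha)).1 h

theorem mul_div_add_one_eq_of_holderConjugate {n n' p q p' : ℝ≥0} (hn : n.HolderConjugate n')
    (hp : p.HolderConjugate q) (hp0 : p' ≠ 0) (hp' : (p' : ℝ)⁻¹ = (p : ℝ)⁻¹ - (n : ℝ)⁻¹) :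
    n' * (p' / q + 1) = p' := by
  have hq0 : (q : ℝ) ≠ 0 := NNReal.coe_ne_zero.2 hp.symm.pos.ne'
  have hn0 : (n' : ℝ) ≠ 0 := NNReal.coe_ne_zero.2 hn.symm.pos.ne'
  have hp0' : (p' : ℝ) ≠ 0 := NNReal.coe_ne_zero.2 hp0
  have hinv : (q : ℝ)⁻¹ + (p' : ℝ)⁻¹ = (n' : ℝ)⁻¹ := by
    have h₁ := hp.coe.inv_add_inv_eq_one
    have h₂ := hn.coe.inv_add_inv_eq_one
    linarith
  rw [← NNReal.coe_inj]
  push_cast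
  field_simp at hinv ⊢
  linarith

variable [MeasurableSpace E] [BorelSpace E]

theorem eLpNorm_le_mul_eLpNorm_fderiv_of_eLpNorm_one [FiniteDimensional ℝ E] {μ : Measure E}
    (hΩ : IsOpen Ω) {C n' p q p' : ℝ≥0∞} [ENNReal.HolderConjugate q p] {δ : ℝ} (hδ : 0 < δ)
    (hqδ : q * ENNReal.ofReal δ = p') (hnδ : n' * ENNReal.ofReal (δ + 1) = p')
    (hC : ∀ v : E → ℝ, ContDiffOn ℝ 1 v Ω → HasCompactSupport v →
      eLpNorm v n' (μ.restrict Ω) ≤ C * eLpNorm (fderiv ℝ v) 1 (μ.restrict Ω))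
    (hu : ContDiffOn ℝ 1 u Ω) (hsupp : HasCompactSupport u)
    (hfin : eLpNorm u p' (μ.restrict Ω) ≠ ∞) :
    eLpNorm u p' (μ.restrict Ω) ≤
      C * ENNReal.ofReal (δ + 1) * eLpNorm (fderiv ℝ u) p (μ.restrict Ω) := by
  have hγ : 1 < δ + 1 := lt_add_of_pos_left 1 hδ
  set v : E → ℝ := fun x => ‖u x‖ ^ (δ + 1)
  have hv : ContDiffOn ℝ 1 v Ω := (contDiff_norm_rpow hγ).comp_contDiffOn hu
  have hv_supp : HasCompactSupport v := hsupp.norm.rpow_const (by positivity)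
  have hfderiv : eLpNorm (fderiv ℝ v) 1 (μ.restrict Ω) ≤ ENNReal.ofReal (δ + 1) *
      (eLpNorm u p' (μ.restrict Ω) ^ δ * eLpNorm (fderiv ℝ u) p (μ.restrict Ω)) := by
    simpa only [add_sub_cancel_right, hqδ] using
      eLpNorm_fderiv_norm_rpow_le (μ := μ) hΩ hu hγ (p := p) (q := q) (r := 1)
  refine le_of_rpow_add_one_le_rpow_mul hδ.le hfin ?_
  calc eLpNorm u p' (μ.restrict Ω) ^ (δ + 1)
      = eLpNorm v n' (μ.restrict Ω) := by rw [eLpNorm_norm_rpow u (by positivity), hnδ]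
    _ ≤ C * eLpNorm (fderiv ℝ v) 1 (μ.restrict Ω) := hC v hv hv_supp
    _ ≤ C * (ENNReal.ofReal (δ + 1) * (eLpNorm u p' (μ.restrict Ω) ^ δ *
          eLpNorm (fderiv ℝ u) p (μ.restrict Ω))) := by gcongr
    _ = _ := by ring

theorem exists_eLpNorm_le_eLpNorm_fderiv_of_basis {ι : Type*} [Fintype ι]
    {b : Module.Basis ι ℝ E} (μ : Measure E) [μ.IsAddHaarMeasure] (hΩ : IsOpen Ω)
    (hb : ∀ i, b i ∈ recessionCone Ω) {p p' : ℝ≥0} (hp : 1 < p) (hpn : p < Fintype.card ι)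
    (hp' : (p' : ℝ)⁻¹ = (p : ℝ)⁻¹ - (Fintype.card ι : ℝ)⁻¹) :
    ∃ C : ℝ≥0, ∀ u : E → F, ContDiffOn ℝ 1 u Ω → HasCompactSupport u →
      eLpNorm u p' (μ.restrict Ω) ≠ ∞ →
      eLpNorm u p' (μ.restrict Ω) ≤ C * eLpNorm (fderiv ℝ u) p (μ.restrict Ω) := by
  have : FiniteDimensional ℝ E := b.finiteDimensional_of_finite
  have hn := NNReal.HolderConjugate.conjExponent (hp.trans hpn)
  have hq := NNReal.HolderConjugate.conjExponent hp
  have : ENNReal.HolderConjugate (NNReal.conjExponent p) p := hq.symm.coe_ennreal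
  have hp'0 : 0 < p' := by
    rw [← NNReal.coe_pos, ← inv_pos, hp', sub_pos]
    exact inv_strictAnti₀ (NNReal.coe_pos.2 (zero_lt_one.trans hp)) (mod_cast hpn)
  set n' := NNReal.conjExponent (Fintype.card ι)
  set q := NNReal.conjExponent p
  set δ : ℝ≥0 := p' / q
  have hδ : 0 < δ := div_pos hp'0 hq.symm.pos
  have hqδ : (q : ℝ≥0∞) * ENNReal.ofReal δ = p' := by
    rw [ENNReal.ofReal_coe_nnreal, ← ENNReal.coe_mul, mul_div_cancel₀ _ hq.symm.pos.ne']
  have hofReal : ENNReal.ofReal (δ + 1) = (δ + 1 : ℝ≥0) :=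
    ENNReal.ofReal_coe_nnreal (p := δ + 1)
  have hnδ : (n' : ℝ≥0∞) * ENNReal.ofReal (δ + 1) = p' := by
    rw [hofReal, ← ENNReal.coe_mul,
      mul_div_add_one_eq_of_holderConjugate hn hq hp'0.ne' (mod_cast hp')]
  obtain ⟨C, hC⟩ := exists_eLpNorm_le_eLpNorm_one_fderiv_of_basis (F := ℝ) μ hΩ hb hn
  refine ⟨C * (δ + 1), fun u hu hsupp hfin => ?_⟩
  rw [ENNReal.coe_mul, ← hofReal]
  exact eLpNorm_le_mul_eLpNorm_fderiv_of_eLpNorm_one hΩ hδ hqδ hnδ hC hu hsupp hfin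

end CompactSupport

section Cutoff

variable {E F : Type*} [NormedAddCommGroup E] [NormedSpace ℝ E]
  [NormedAddCommGroup F] [NormedSpace ℝ F] {u : E → F} {Ω : Set E} {χ : E → ℝ} {R ε : ℝ}

/-- `χ` is a cutoff function: it is `1` on the ball of radius `R` about the origin, has compact
support, and its slope is at most `ε`. The size of the support is left free, since multiplying by
`χ` costs only the slope. -/
structure IsCutoff (χ : E → ℝ) (R ε : ℝ) : Prop where
  contDiff : ContDiff ℝ 1 χ
  hasCompactSupport : HasCompactSupport χ
  norm_le_one : ∀ x, ‖χ x‖ ≤ 1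
  eq_one : ∀ x, ‖x‖ ≤ R → χ x = 1
  norm_fderiv_le : ∀ x, ‖fderiv ℝ χ x‖ ≤ ε

theorem exists_isCutoff [FiniteDimensional ℝ E] (R : ℝ) (hε : 0 < ε) :
    ∃ χ : E → ℝ, IsCutoff χ R ε := by
  let φ : ContDiffBump (0 : E) := ⟨1, 2, one_pos, one_lt_two⟩
  obtain ⟨K, hK⟩ := (φ.hasCompactSupport.fderiv ℝ).exists_bound_of_continuous
    ((φ.contDiff (n := 1)).continuous_fderiv one_ne_zero)
  have hK0 : 0 ≤ K := (norm_nonneg _).trans (hK 0)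
  obtain ⟨s, hs, hsR, hsK⟩ : ∃ s : ℝ, 0 < s ∧ s * |R| ≤ 1 ∧ s * K ≤ ε := by
    refine ⟨min (1 / (|R| + 1)) (ε / (K + 1)), by positivity, ?_, ?_⟩
    · calc min (1 / (|R| + 1)) (ε / (K + 1)) * |R| ≤ 1 / (|R| + 1) * (|R| + 1) := by
            gcongr
            exacts [min_le_left _ _, by linarith]
        _ = 1 := by field_simp
    · calc min (1 / (|R| + 1)) (ε / (K + 1)) * K ≤ ε / (K + 1) * (K + 1) := by
            gcongr
            exacts [min_le_right _ _, by linarith]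
        _ = ε := by field_simp
  refine ⟨fun x => φ (s • x), φ.contDiff.comp (contDiff_const_smul s),
    φ.hasCompactSupport.comp_smul hs.ne', fun x => ?_, fun x hx => ?_, fun x => ?_⟩
  · rw [Real.norm_of_nonneg φ.nonneg]
    exact φ.le_one
  · refine φ.one_of_mem_closedBall (mem_closedBall_zero_iff.2 ?_)
    rw [norm_smul, Real.norm_of_nonneg hs.le]
    exact (mul_le_mul_of_nonneg_left (hx.trans (le_abs_self R)) hs.le).trans hsR
  · rw [fderiv_comp_smul, norm_smul, Real.norm_of_nonneg hs.le]
    exact (mul_le_mul_of_nonneg_left (hK _) hs.le).trans hsK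

namespace IsCutoff

theorem norm_fderiv_smul_le {x : E} (hχ : IsCutoff χ R ε) (hu : DifferentiableAt ℝ u x) :
    ‖fderiv ℝ (χ • u) x‖ ≤ ‖fderiv ℝ u x‖ + ε * ‖u x‖ := by
  rw [fderiv_smul (hχ.contDiff.differentiable one_ne_zero x) hu]
  refine (norm_add_le _ _).trans (add_le_add ?_ ?_)
  · rw [norm_smul]
    exact mul_le_of_le_one_left (norm_nonneg _) (hχ.norm_le_one x)
  · rw [ContinuousLinearMap.norm_smulRight_apply]
    exact mul_le_mul_of_nonneg_right (hχ.norm_fderiv_le x) (norm_nonneg _)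

variable [MeasurableSpace E] [BorelSpace E] {μ : Measure E}

theorem eLpNorm_fderiv_smul_le [FiniteDimensional ℝ E] (hχ : IsCutoff χ R ε) (hΩ : IsOpen Ω)
    (hu : ContDiffOn ℝ 1 u Ω) {p : ℝ≥0∞} (hp : 1 ≤ p) :
    eLpNorm (fderiv ℝ (χ • u)) p (μ.restrict Ω) ≤
      eLpNorm (fderiv ℝ u) p (μ.restrict Ω) + ENNReal.ofReal ε * eLpNorm u p (μ.restrict Ω) := by
  have hε : 0 ≤ ε := (norm_nonneg _).trans (hχ.norm_fderiv_le 0)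
  have hu_meas : AEStronglyMeasurable u (μ.restrict Ω) :=
    hu.continuousOn.aestronglyMeasurable hΩ.measurableSet
  have hfderiv_meas : AEStronglyMeasurable (fderiv ℝ u) (μ.restrict Ω) :=
    (hu.continuousOn_fderiv_of_isOpen hΩ le_rfl).aestronglyMeasurable hΩ.measurableSet
  have hpoint : ∀ᵐ x ∂μ.restrict Ω,
      ‖fderiv ℝ (χ • u) x‖ ≤ (fun x => ‖fderiv ℝ u x‖) x + (fun x => ε * ‖u x‖) x := by
    filter_upwards [ae_restrict_mem hΩ.measurableSet] with x hx
    exact hχ.norm_fderiv_smul_le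
      ((hu.differentiableOn one_ne_zero).differentiableAt (hΩ.mem_nhds hx))
  calc eLpNorm (fderiv ℝ (χ • u)) p (μ.restrict Ω)
      ≤ eLpNorm (fun x => ‖fderiv ℝ u x‖) p (μ.restrict Ω) +
          eLpNorm (fun x => ε * ‖u x‖) p (μ.restrict Ω) :=
        (eLpNorm_mono_ae_real hpoint).trans
          (eLpNorm_add_le hfderiv_meas.norm (hu_meas.norm.const_mul ε) hp)
    _ = _ := by
        have := eLpNorm_const_smul ε (fun x => ‖u x‖) p (μ.restrict Ω)
        rw [eLpNorm_norm] at this ⊢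
        rw [← Real.enorm_of_nonneg hε, ← this]
        rfl

theorem eLpNorm_smul_ne_top [IsFiniteMeasureOnCompacts μ] (hχ : IsCutoff χ R ε)
    (hΩ : MeasurableSet Ω) (hu : ContinuousOn u (closure Ω)) (p : ℝ≥0∞) :
    eLpNorm (χ • u) p (μ.restrict Ω) ≠ ∞ := by
  set K := tsupport χ
  have hK : IsCompact K := hχ.hasCompactSupport
  obtain ⟨B, hB⟩ := (hK.inter_left isClosed_closure).exists_bound_of_continuousOn
    (hu.mono inter_subset_left)
  have hbound : ∀ᵐ x ∂μ.restrict Ω, ‖(χ • u) x‖ ≤ K.indicator (fun _ => B) x := by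
    filter_upwards [ae_restrict_mem hΩ] with x hx
    by_cases hxK : x ∈ K
    · rw [indicator_of_mem hxK, Pi.smul_apply', norm_smul]
      exact (mul_le_of_le_one_left (norm_nonneg _) (hχ.norm_le_one x)).trans
        (hB x ⟨subset_closure hx, hxK⟩)
    · rw [indicator_of_notMem hxK, Pi.smul_apply', image_eq_zero_of_notMem_tsupport hxK,
        zero_smul, norm_zero]
  refine ((eLpNorm_mono_ae_real hbound).trans_lt (MemLp.eLpNorm_lt_top ?_)).ne
  exact memLp_indicator_const p hK.measurableSet B (Or.inr hK.measure_ne_top)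

end IsCutoff

variable [MeasurableSpace E] [BorelSpace E] {μ : Measure E}

theorem eLpNorm_le_of_forall_hasCompactSupport [FiniteDimensional ℝ E] [IsFiniteMeasureOnCompacts μ]
    (hΩ : IsOpen Ω) {C : ℝ≥0} {p q : ℝ≥0∞} (hp : 1 ≤ p)
    (hC : ∀ w : E → F, ContDiffOn ℝ 1 w Ω → HasCompactSupport w →
      eLpNorm w q (μ.restrict Ω) ≠ ∞ →
      eLpNorm w q (μ.restrict Ω) ≤ C * eLpNorm (fderiv ℝ w) p (μ.restrict Ω))
    (hu : ContDiffOn ℝ 1 u Ω) (hu_closure : ContinuousOn u (closure Ω))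
    (hfin : eLpNorm u p (μ.restrict Ω) ≠ ∞) :
    eLpNorm u q (μ.restrict Ω) ≤ C * eLpNorm (fderiv ℝ u) p (μ.restrict Ω) := by
  choose χ hχ using fun k : ℕ =>
    exists_isCutoff (E := E) k (Nat.one_div_pos_of_nat (α := ℝ) (n := k))
  have hcontDiff (k : ℕ) : ContDiffOn ℝ 1 (χ k • u) Ω := (hχ k).contDiff.contDiffOn.smul hu
  have hconv (x : E) : Tendsto (fun k => (χ k • u) x) atTop (nhds (u x)) := by
    obtain ⟨N, hN⟩ := exists_nat_ge ‖x‖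
    refine tendsto_const_nhds.congr' ?_
    filter_upwards [eventually_ge_atTop N] with k hk
    rw [Pi.smul_apply', (hχ k).eq_one x (hN.trans (mod_cast hk)), one_smul]
  have hbound (k : ℕ) : eLpNorm (χ k • u) q (μ.restrict Ω) ≤
      C * (eLpNorm (fderiv ℝ u) p (μ.restrict Ω) +
        ENNReal.ofReal (1 / ((k : ℝ) + 1)) * eLpNorm u p (μ.restrict Ω)) :=
    (hC _ (hcontDiff k) (hχ k).hasCompactSupport.smul_right
      ((hχ k).eLpNorm_smul_ne_top hΩ.measurableSet hu_closure q)).trans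
      (mul_le_mul_right ((hχ k).eLpNorm_fderiv_smul_le hΩ hu hp) _)
  have hlim : Tendsto (fun k : ℕ => C * (eLpNorm (fderiv ℝ u) p (μ.restrict Ω) +
      ENNReal.ofReal (1 / ((k : ℝ) + 1)) * eLpNorm u p (μ.restrict Ω))) atTop
      (nhds (C * eLpNorm (fderiv ℝ u) p (μ.restrict Ω))) := by
    have herr := ENNReal.Tendsto.mul_const
      (ENNReal.tendsto_ofReal (tendsto_one_div_add_atTop_nhds_zero_nat (𝕜 := ℝ))) (Or.inr hfin)
    rw [ENNReal.ofReal_zero, zero_mul] at herr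
    simpa only [add_zero] using
      ENNReal.Tendsto.const_mul (tendsto_const_nhds.add herr) (Or.inr ENNReal.coe_ne_top)
  calc eLpNorm u q (μ.restrict Ω)
      ≤ liminf (fun k => eLpNorm (χ k • u) q (μ.restrict Ω)) atTop :=
        Lp.eLpNorm_lim_le_liminf_eLpNorm
          (fun k => (hcontDiff k).continuousOn.aestronglyMeasurable hΩ.measurableSet) u
          (ae_of_all _ hconv)
    _ ≤ _ := liminf_le_liminf (Eventually.of_forall hbound)
    _ = _ := hlim.liminf_eq

end Cutoff

section Sobolev

variable {E F : Type*} [NormedAddCommGroup E] [NormedSpace ℝ E] [FiniteDimensional ℝ E]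
  [MeasurableSpace E] [BorelSpace E] [NormedAddCommGroup F] [InnerProductSpace ℝ F] {Ω : Set E}

theorem exists_eLpNorm_le_eLpNorm_fderiv_of_span_recessionCone (μ : Measure E)
    [μ.IsAddHaarMeasure] (hΩ : IsOpen Ω) (hspan : Submodule.span ℝ (recessionCone Ω) = ⊤)
    {p p' : ℝ≥0} (hp : 1 < p) (hpn : p < Module.finrank ℝ E)
    (hp' : (p' : ℝ)⁻¹ = (p : ℝ)⁻¹ - (Module.finrank ℝ E : ℝ)⁻¹) :
    ∃ C : ℝ≥0, ∀ u : E → F, ContDiffOn ℝ 1 u Ω → ContinuousOn u (closure Ω) →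
      eLpNorm u p (μ.restrict Ω) ≠ ∞ →
      eLpNorm u p' (μ.restrict Ω) ≤ C * eLpNorm (fderiv ℝ u) p (μ.restrict Ω) := by
  set b := Module.Basis.ofSpan hspan.ge
  have := FiniteDimensional.fintypeBasisIndex b
  have hb : ∀ i, b i ∈ recessionCone Ω := fun i =>
    Module.Basis.ofSpan_subset hspan.ge (mem_range_self i)
  rw [Module.finrank_eq_card_basis b] at hpn hp'
  obtain ⟨C, hC⟩ := exists_eLpNorm_le_eLpNorm_fderiv_of_basis (F := F) μ hΩ hb hp hpn hp'
  exact ⟨C, fun u hu hu_closure hfin =>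
    eLpNorm_le_of_forall_hasCompactSupport hΩ (mod_cast hp.le) hC hu hu_closure hfin⟩

end Sobolev

section Epigraph

variable {E G : Type*} [NormedAddCommGroup E] [NormedSpace ℝ E]
  [NormedAddCommGroup G] [NormedSpace ℝ G] {M : G → ℝ} {L : ℝ≥0}

theorem mem_recessionCone_of_lipschitzWith (hM : LipschitzWith L M) {P : E →L[ℝ] G}
    {ℓ : E →L[ℝ] ℝ} {v : E} (hv : L * ‖P v‖ < ℓ v) :
    v ∈ recessionCone {x | M (P x) < ℓ x} := by
  intro x hx t ht
  rw [mem_ofPred_eq] at hx ⊢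
  have hlip : M (P (x + t • v)) - M (P x) ≤ L * (t * ‖P v‖) := by
    have := (le_abs_self _).trans (hM.dist_le_mul (P (x + t • v)) (P x))
    rwa [dist_eq_norm, ← map_sub, add_sub_cancel_left, map_smul, norm_smul,
      Real.norm_of_nonneg ht] at this
  calc M (P (x + t • v)) ≤ M (P x) + t * (L * ‖P v‖) := by linarith
    _ < ℓ x + t * ℓ v := add_lt_add_of_lt_of_le hx (mul_le_mul_of_nonneg_left hv.le ht)
    _ = ℓ (x + t • v) := by rw [map_add, map_smul, smul_eq_mul]

theorem span_recessionCone_eq_top_of_lipschitzWith (hM : LipschitzWith L M) {P : E →L[ℝ] G}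
    {ℓ : E →L[ℝ] ℝ} {e : E} (hPe : P e = 0) (hℓe : 0 < ℓ e) :
    Submodule.span ℝ (recessionCone {x | M (P x) < ℓ x}) = ⊤ := by
  refine Submodule.eq_top_of_nonempty_interior' _ ⟨e, mem_interior.2 ?_⟩
  refine ⟨{v | L * ‖P v‖ < ℓ v}, fun v hv => Submodule.subset_span ?_,
    isOpen_lt (by fun_prop) (by fun_prop), ?_⟩
  · exact mem_recessionCone_of_lipschitzWith hM hv
  · rwa [mem_ofPred_eq, hPe, norm_zero, mul_zero]

end Epigraph

section PerturbedHalfSpace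

variable {M : E2 → ℝ} {L : ℝ≥0}

/-- The projection `proj2` on the tangential variables as a continuous linear map. -/
def proj2L : E3 →L[ℝ] E2 := LinearMap.toContinuousLinearMap
  { toFun := proj2
    map_add' := fun x y => by ext i; fin_cases i <;> rfl
    map_smul' := fun c x => by ext i; fin_cases i <;> rfl }

theorem isOpen_Omg (hM : Continuous M) : IsOpen (Omg M) :=
  isOpen_lt (hM.comp proj2L.continuous) (EuclideanSpace.proj (0 : Fin 3)).continuous

theorem span_recessionCone_Omg_eq_top (hM : LipschitzWith L M) :
    Submodule.span ℝ (recessionCone (Omg M)) = ⊤ := by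
  set e₀ : E3 := EuclideanSpace.single 0 1
  let ℓ : E3 →L[ℝ] ℝ := EuclideanSpace.proj 0
  have hproj : proj2L e₀ = 0 := by
    ext i
    fin_cases i <;> rfl
  have hℓ : 0 < ℓ e₀ := by simp [ℓ, e₀]
  have hΩ : Omg M = {x | M (proj2L x) < ℓ x} := rfl
  rw [hΩ]
  exact span_recessionCone_eq_top_of_lipschitzWith hM hproj hℓ

end PerturbedHalfSpace

theorem sobolev_L6_inequality_general (M : E2 → ℝ) {L : ℝ≥0} (hM : LipschitzWith L M) :
    ∃ C : ℝ, 0 < C ∧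
      ∀ f : E3 → ℝ, ContDiffOn ℝ 1 f (Omg M) → ContinuousOn f (closure (Omg M)) →
        IntegrableOn (fun x => f x ^ 2) (Omg M) →
        IntegrableOn (fun x => ‖fderiv ℝ f x‖ ^ 2) (Omg M) →
        (∫⁻ x in Omg M, ENNReal.ofReal (|f x| ^ 6)) ^ (1/6 : ℝ) ≤
          ENNReal.ofReal (C * (∫ x in Omg M, ‖fderiv ℝ f x‖ ^ 2) ^ (1/2 : ℝ)) := by
  have hΩ : IsOpen (Omg M) := isOpen_Omg hM.continuous
  have hfinrank : Module.finrank ℝ E3 = 3 := finrank_euclideanSpace_fin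
  obtain ⟨C, hC⟩ := exists_eLpNorm_le_eLpNorm_fderiv_of_span_recessionCone (F := ℝ) volume hΩ
    (span_recessionCone_Omg_eq_top hM) (p := 2) (p' := 6) one_lt_two
    (by rw [hfinrank]; norm_num) (by rw [hfinrank]; norm_num)
  refine ⟨C + 1, by positivity, fun f hf hf_closure hf_sq hfderiv_sq => ?_⟩
  have hf_Lp : MemLp f 2 (volume.restrict (Omg M)) :=
    (memLp_two_iff_integrable_sq (hf.continuousOn.aestronglyMeasurable hΩ.measurableSet)).2 hf_sq
  have hfderiv_Lp : MemLp (fderiv ℝ f) 2 (volume.restrict (Omg M)) :=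
    (memLp_two_iff_integrable_sq_norm (measurable_fderiv ℝ f).aestronglyMeasurable).2 hfderiv_sq
  calc (∫⁻ x in Omg M, ENNReal.ofReal (|f x| ^ 6)) ^ (1/6 : ℝ)
      = eLpNorm f 6 (volume.restrict (Omg M)) := by
        rw [eLpNorm_eq_lintegral_rpow_enorm_toReal (by norm_num) (by norm_num)]
        simp [ENNReal.ofReal_pow, Real.enorm_eq_ofReal_abs]
    _ ≤ C * eLpNorm (fderiv ℝ f) 2 (volume.restrict (Omg M)) :=
        hC f hf hf_closure hf_Lp.eLpNorm_ne_top
    _ ≤ ENNReal.ofReal (C + 1) * ENNReal.ofReal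
          ((∫ x in Omg M, ‖fderiv ℝ f x‖ ^ 2) ^ (1/2 : ℝ)) := by
        rw [hfderiv_Lp.eLpNorm_eq_integral_rpow_norm two_ne_zero ENNReal.ofNat_ne_top]
        gcongr
        · rw [← ENNReal.ofReal_coe_nnreal]
          exact ENNReal.ofReal_le_ofReal (by linarith)
        · simp
    _ = _ := (ENNReal.ofReal_mul (by positivity)).symm

theorem sobolev_L6_inequality (M : E2 → ℝ) (hM : ContDiff ℝ (⊤ : ℕ∞) M)
    (hMint : ∀ j ≤ 9, Integrable fun x' : E2 => ‖iteratedFDeriv ℝ j M x'‖ ^ 2) :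
    ∃ C : ℝ, 0 < C ∧
      ∀ f : E3 → ℝ, ContDiffOn ℝ 1 f (closure (Omg M)) →
        IntegrableOn (fun x => f x ^ 2) (Omg M) →
        IntegrableOn (fun x => ‖fderiv ℝ f x‖ ^ 2) (Omg M) →
        (∫⁻ x in Omg M, ENNReal.ofReal (|f x| ^ 6)) ^ (1/6 : ℝ) ≤
          ENNReal.ofReal (C * (∫ x in Omg M, ‖fderiv ℝ f x‖ ^ 2) ^ (1/2 : ℝ)) := by
  obtain ⟨L, hL⟩ := exists_lipschitzWith_of_integrable_norm_iteratedFDeriv_sq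
    (hM.of_le (mod_cast le_top)) fun j hj => hMint j (hj.2.trans (by simp))
  obtain ⟨C, hC_pos, hC⟩ := sobolev_L6_inequality_general M hL
  exact ⟨C, hC_pos, fun f hf => hC f (hf.mono subset_closure) hf.continuousOn⟩
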